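/- For every natural number k, Fib(2k+5)² + Fib(2k+1)² - 7·Fib(2k+5)·Fib(2k+1) + 9 = 0; that is, the outer corner pairs (p, q) = (Fib(2k+5), Fib(2k+1)) satisfy the Diophantine equation p² + q² - 7pq + 9 = 0 with equality. -/

import Mathlib

/-!
By the addition formula `fib (n + m)` is a linear form in `fib n` and `fib (n + 1)`. Writing
`L m = fib (m - 1) + fib (m + 1)` for the `m`-th Lucas number, this makes
`fib (n + m) ^ 2 + (-1) ^ m * fib n ^ 2 - L m * fib (n + m) * fib n` a binary quadratic form in
them. Cassini's identity at `m` reduces it to `fib m ^ 2` times the form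
`fib (n + 1) ^ 2 - fib (n + 1) * fib n - fib n ^ 2`, which is `(-1) ^ n` by Cassini's identity
at `n`. The constants `7` and `9` are `L 4` and `fib 4 ^ 2`.
-/

theorem fib_add_sq_add_fib_sq_sub_lucas_mul (m n : ℤ) :
    Int.fib (n + m) ^ 2 + (-1) ^ m.natAbs * Int.fib n ^ 2 -
      (Int.fib (m - 1) + Int.fib (m + 1)) * Int.fib (n + m) * Int.fib n =
        (-1) ^ n.natAbs * Int.fib m ^ 2 := by
  have fib_add : Int.fib (n + m) = Int.fib (m - 1) * Int.fib n + Int.fib m * Int.fib (n + 1) := by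
    rw [add_comm, Int.fib_add]
  have fib_succ (i : ℤ) : Int.fib (i + 1) = Int.fib (i - 1) + Int.fib i := by
    grind [Int.fib_add_two]
  have cassini_m := Int.fib_succ_mul_fib_pred_sub_fib_sq m
  have cassini_n := Int.fib_succ_mul_fib_pred_sub_fib_sq n
  rw [fib_succ] at cassini_m cassini_n
  rw [fib_add, fib_succ m, fib_succ n]
  linear_combination Int.fib m ^ 2 * cassini_n - Int.fib n ^ 2 * cassini_m

theorem outer_corner_diophantine_general (n : ℕ) :
    (Nat.fib (n + 4) : ℤ) ^ 2 + (Nat.fib n : ℤ) ^ 2 -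
      7 * (Nat.fib (n + 4) : ℤ) * (Nat.fib n : ℤ) = 9 * (-1) ^ n := by
  have lucas_form_four : (Nat.fib (n + 4) : ℤ) ^ 2 + (-1) ^ 4 * (Nat.fib n : ℤ) ^ 2 -
      7 * (Nat.fib (n + 4) : ℤ) * (Nat.fib n : ℤ) = (-1) ^ n * 3 ^ 2 :=
    fib_add_sq_add_fib_sq_sub_lucas_mul 4 n
  linear_combination lucas_form_four

/-- For every natural number `k`,
`Fib (2k+5)^2 + Fib (2k+1)^2 - 7 * Fib (2k+5) * Fib (2k+1) + 9 = 0`;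
that is, the outer corner pairs `(p, q) = (Fib (2k+5), Fib (2k+1))` satisfy the
Diophantine equation `p² + q² - 7pq + 9 = 0` with equality. -/
theorem outer_corner_diophantine (k : ℕ) :
    (Nat.fib (2 * k + 5) : ℤ) ^ 2 + (Nat.fib (2 * k + 1) : ℤ) ^ 2 -
      7 * (Nat.fib (2 * k + 5) : ℤ) * (Nat.fib (2 * k + 1) : ℤ) + 9 = 0 := by
  rw [outer_corner_diophantine_general (2 * k + 1), (odd_two_mul_add_one k).neg_one_pow]
  norm_num
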